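/- For every two-user discrete memoryless interference channel with degraded message sets in which transmitter 1 knows both messages, the region ℛ_in is achievable: ℛ_in ⊆ C^{T₁}_{IFC}, where ℛ_in is the set of all rate pairs (R₁,R₂) such that R₁ ≤ I(V;Y₁) − I(V;U,X₂) and R₂ ≤ I(U,X₂;Y₂) for some finite-valued auxiliary random variables (U,V) with joint distribution factoring as p(u,x₂)·p(v|u,x₂)·p(x₁|v)·P(y₁,y₂|x₁,x₂). -/

import Mathlib

open scoped BigOperators

noncomputable section

/-- Shannon entropy (base 2) of a finitely supported probability vector. -/
def ent {A : Type*} [Fintype A] (p : A → ℝ) : ℝ :=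
  -∑ a, p a * Real.logb 2 (p a)

/-- The distribution (pushforward) of a random variable `f` on a finite
probability space with probability mass function `μ`. -/
def lawOf {Ω A : Type*} [Fintype Ω] [DecidableEq A] (μ : Ω → ℝ) (f : Ω → A) : A → ℝ :=
  fun a => ∑ ω, if f ω = a then μ ω else 0

/-- Shannon entropy (base 2) of a random variable `f` on a finite probability space. -/
def entRV {Ω A : Type*} [Fintype Ω] [Fintype A] [DecidableEq A] (μ : Ω → ℝ) (f : Ω → A) : ℝ :=
  ent (lawOf μ f)

/-- Mutual information `I(f; g)` (base 2) on a finite probability space. -/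
def miRV {Ω A B : Type*} [Fintype Ω] [Fintype A] [Fintype B] [DecidableEq A] [DecidableEq B]
    (μ : Ω → ℝ) (f : Ω → A) (g : Ω → B) : ℝ :=
  entRV μ f + entRV μ g - entRV μ (fun ω => (f ω, g ω))

/-- Conditional mutual information `I(f; g | h)` (base 2) on a finite probability space. -/
def cmiRV {Ω A B C : Type*} [Fintype Ω] [Fintype A] [Fintype B] [Fintype C]
    [DecidableEq A] [DecidableEq B] [DecidableEq C]
    (μ : Ω → ℝ) (f : Ω → A) (g : Ω → B) (h : Ω → C) : ℝ :=
  entRV μ (fun ω => (f ω, h ω)) + entRV μ (fun ω => (g ω, h ω))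
    - entRV μ (fun ω => (f ω, g ω, h ω)) - entRV μ h

/-- A two-user discrete memoryless interference channel with finite input alphabets
`X1`, `X2` and finite output alphabets `Y1`, `Y2`. -/
structure DMIFC (X1 X2 Y1 Y2 : Type) [Fintype X1] [Fintype X2] [Fintype Y1] [Fintype Y2] where
  W : X1 → X2 → Y1 → Y2 → ℝ
  nonneg : ∀ x1 x2 y1 y2, 0 ≤ W x1 x2 y1 y2
  sum_one : ∀ x1 x2, ∑ y1, ∑ y2, W x1 x2 y1 y2 = 1

variable {X1 X2 Y1 Y2 : Type} [Fintype X1] [Fintype X2] [Fintype Y1] [Fintype Y2]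
  [DecidableEq X1] [DecidableEq X2] [DecidableEq Y1] [DecidableEq Y2]

/-- Average probability that receiver 1 decodes its message incorrectly, for a given
code for the IFC with degraded message sets (transmitter 1 knows both messages),
with the messages uniform and independent and the channel used `n` times without feedback. -/
def pe1 (ch : DMIFC X1 X2 Y1 Y2) (n M1 M2 : ℕ)
    (f1 : Fin M1 → Fin M2 → Fin n → X1) (f2 : Fin M2 → Fin n → X2)
    (g1 : (Fin n → Y1) → Fin M1) : ℝ :=
  (1 / (M1 * M2) : ℝ) * ∑ w1 : Fin M1, ∑ w2 : Fin M2, ∑ y1 : Fin n → Y1, ∑ y2 : Fin n → Y2,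
    (∏ i, ch.W (f1 w1 w2 i) (f2 w2 i) (y1 i) (y2 i)) * (if g1 y1 = w1 then 0 else 1)

/-- Average probability that receiver 2 decodes its message incorrectly. -/
def pe2 (ch : DMIFC X1 X2 Y1 Y2) (n M1 M2 : ℕ)
    (f1 : Fin M1 → Fin M2 → Fin n → X1) (f2 : Fin M2 → Fin n → X2)
    (g2 : (Fin n → Y2) → Fin M2) : ℝ :=
  (1 / (M1 * M2) : ℝ) * ∑ w1 : Fin M1, ∑ w2 : Fin M2, ∑ y1 : Fin n → Y1, ∑ y2 : Fin n → Y2,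
    (∏ i, ch.W (f1 w1 w2 i) (f2 w2 i) (y1 i) (y2 i)) * (if g2 y2 = w2 then 0 else 1)

/-- A rate pair `(R1, R2)` is achievable for the IFC with degraded message sets
(transmitter 1 informed) if there are codes of arbitrarily small error probability
whose rates are arbitrarily close to `(R1, R2)`. -/
def AchievableT1 (ch : DMIFC X1 X2 Y1 Y2) (R1 R2 : ℝ) : Prop :=
  ∀ ε : ℝ, 0 < ε → ∃ (n M1 M2 : ℕ) (f1 : Fin M1 → Fin M2 → Fin n → X1)
    (f2 : Fin M2 → Fin n → X2) (g1 : (Fin n → Y1) → Fin M1) (g2 : (Fin n → Y2) → Fin M2),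
    0 < n ∧ 0 < M1 ∧ 0 < M2 ∧
    R1 - ε ≤ Real.logb 2 M1 / n ∧ R2 - ε ≤ Real.logb 2 M2 / n ∧
    pe1 ch n M1 M2 f1 f2 g1 ≤ ε ∧ pe2 ch n M1 M2 f1 f2 g2 ≤ ε

/-- The capacity region `C^{T₁}_{IFC}` of the IFC with degraded message sets
(transmitter 1 knows both messages): the closure of the set of achievable rate pairs. -/
def CapacityT1 (ch : DMIFC X1 X2 Y1 Y2) : Set (ℝ × ℝ) :=
  closure {R : ℝ × ℝ | AchievableT1 ch R.1 R.2}

/-- The joint distribution on `(U, V, X₁, X₂, Y₁, Y₂)` factoring as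
`p(u,x₂) p(v|u,x₂) p(x₁|v) P(y₁,y₂|x₁,x₂)`. -/
def jointIn (ch : DMIFC X1 X2 Y1 Y2) (nU nV : ℕ)
    (pUX2 : Fin nU → X2 → ℝ) (pV : Fin nU → X2 → Fin nV → ℝ) (pX1 : Fin nV → X1 → ℝ) :
    Fin nU × Fin nV × X1 × X2 × Y1 × Y2 → ℝ :=
  fun p =>
    pUX2 p.1 p.2.2.2.1 * pV p.1 p.2.2.2.1 p.2.1 * pX1 p.2.1 p.2.2.1 *
      ch.W p.2.2.1 p.2.2.2.1 p.2.2.2.2.1 p.2.2.2.2.2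

/-- The Gel'fand–Pinsker achievable region `ℛ_in`: all rate pairs `(R₁, R₂)` with
`R₁ ≤ I(V; Y₁) − I(V; U, X₂)` and `R₂ ≤ I(U, X₂; Y₂)` for some finite-valued
auxiliary random variables `(U, V)` whose joint distribution with the inputs and
outputs factors as `p(u,x₂) p(v|u,x₂) p(x₁|v) P(y₁,y₂|x₁,x₂)`. -/
def Rin (ch : DMIFC X1 X2 Y1 Y2) : Set (ℝ × ℝ) :=
  {R | ∃ (nU nV : ℕ) (pUX2 : Fin nU → X2 → ℝ) (pV : Fin nU → X2 → Fin nV → ℝ)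
      (pX1 : Fin nV → X1 → ℝ),
    (∀ u x2, 0 ≤ pUX2 u x2) ∧ (∑ u, ∑ x2, pUX2 u x2) = 1 ∧
    (∀ u x2 v, 0 ≤ pV u x2 v) ∧ (∀ u x2, ∑ v, pV u x2 v = 1) ∧
    (∀ v x1, 0 ≤ pX1 v x1) ∧ (∀ v, ∑ x1, pX1 v x1 = 1) ∧
    R.1 ≤ miRV (jointIn ch nU nV pUX2 pV pX1) (fun p => p.2.1) (fun p => p.2.2.2.2.1)
          - miRV (jointIn ch nU nV pUX2 pV pX1) (fun p => p.2.1) (fun p => (p.1, p.2.2.2.1)) ∧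
    R.2 ≤ miRV (jointIn ch nU nV pUX2 pV pX1) (fun p => (p.1, p.2.2.2.1)) (fun p => p.2.2.2.2.2)}

/-- Real-valued indicator of a proposition. -/
def ind (p : Prop) : ℝ := @ite ℝ p (Classical.propDecidable p) 1 0

lemma ind_pos {p : Prop} (h : p) : ind p = 1 := by simp [ind, h]
lemma ind_neg {p : Prop} (h : ¬ p) : ind p = 0 := by simp [ind, h]
lemma ind_nonneg (p : Prop) : 0 ≤ ind p := by
  by_cases h : p
  · simp [ind_pos h]
  · simp [ind_neg h]
lemma ind_le_one (p : Prop) : ind p ≤ 1 := by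
  by_cases h : p
  · simp [ind_pos h]
  · simp [ind_neg h]

/-- Expectation over an i.i.d. family. -/
def Ex {ι A : Type*} [Fintype ι] [DecidableEq ι] [Fintype A] (q : A → ℝ) (F : (ι → A) → ℝ) : ℝ :=
  ∑ c : ι → A, (∏ i, q (c i)) * F c

section ExLemmas
variable {ι A : Type*} [Fintype ι] [DecidableEq ι] [Fintype A]

lemma Ex_prod (q : A → ℝ) (h : ι → A → ℝ) :
    Ex q (fun c => ∏ i, h i (c i)) = ∏ i, ∑ a, q a * h i a := by
  unfold Ex
  simp_rw [← Finset.prod_mul_distrib]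
  rw [Finset.prod_univ_sum, Fintype.piFinset_univ]

lemma Ex_one (q : A → ℝ) (hq : ∑ a, q a = 1) (i : ι) (f : A → ℝ) :
    Ex q (fun c => f (c i)) = ∑ a, q a * f a := by
  have h := Ex_prod q (fun (k : ι) a => if k = i then f a else 1)
  simp only [Finset.prod_ite_eq', Finset.mem_univ, if_true] at h
  rw [h, Finset.prod_eq_single i]
  · simp
  · intro k _ hk; simp [hk, hq]
  · simp

lemma Ex_two (q : A → ℝ) (hq : ∑ a, q a = 1) {i j : ι} (hij : i ≠ j) (f g : A → ℝ) :
    Ex q (fun c => f (c i) * g (c j)) = (∑ a, q a * f a) * (∑ a, q a * g a) := by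
  have h := Ex_prod q (fun (k : ι) a => (if k = i then f a else 1) * (if k = j then g a else 1))
  simp only [Finset.prod_mul_distrib, Finset.prod_ite_eq', Finset.mem_univ, if_true] at h
  rw [h]
  have : ∀ k : ι, (∑ a, q a * ((if k = i then f a else 1) * (if k = j then g a else 1)))
      = (if k = i then ∑ a, q a * f a else 1) * (if k = j then ∑ a, q a * g a else 1) := by
    intro k
    by_cases h1 : k = i
    · have h2 : k ≠ j := fun h => hij (h1 ▸ h)
      simp [h1, hij]
    · by_cases h2 : k = j
      · simp [h2, hij.symm]
      · simp [h1, h2, hq]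
  simp_rw [this, Finset.prod_mul_distrib]
  simp

lemma Ex_add (q : A → ℝ) (F G : (ι → A) → ℝ) :
    Ex q (fun c => F c + G c) = Ex q F + Ex q G := by
  simp [Ex, mul_add, Finset.sum_add_distrib]

lemma Ex_smul (q : A → ℝ) (r : ℝ) (F : (ι → A) → ℝ) :
    Ex q (fun c => r * F c) = r * Ex q F := by
  simp only [Ex, Finset.mul_sum]
  exact Finset.sum_congr rfl fun c _ => by ring

lemma Ex_sum {κ : Type*} (s : Finset κ) (q : A → ℝ) (F : κ → (ι → A) → ℝ) :
    Ex q (fun c => ∑ k ∈ s, F k c) = ∑ k ∈ s, Ex q (F k) := by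
  simp only [Ex, Finset.mul_sum]
  rw [Finset.sum_comm]

lemma Ex_mono (q : A → ℝ) (hq : ∀ a, 0 ≤ q a) {F G : (ι → A) → ℝ} (h : ∀ c, F c ≤ G c) :
    Ex q F ≤ Ex q G :=
  Finset.sum_le_sum fun c _ => mul_le_mul_of_nonneg_left (h c) (Finset.prod_nonneg fun i _ => hq _)

lemma sum_prod_one (q : A → ℝ) (hq : ∑ a, q a = 1) : ∑ c : ι → A, ∏ i, q (c i) = 1 := by
  have h := Ex_prod q (fun (_ : ι) (_ : A) => (1:ℝ))
  simpa [Ex, hq] using h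

lemma Ex_const (q : A → ℝ) (hq : ∑ a, q a = 1) (r : ℝ) :
    Ex q (fun _ : ι → A => r) = r := by
  rw [Ex, ← Finset.sum_mul, sum_prod_one q hq, one_mul]

lemma Ex_comm {κ B : Type*} [Fintype κ] [DecidableEq κ] [Fintype B] (q : A → ℝ) (r : B → ℝ)
    (F : (ι → A) → (κ → B) → ℝ) :
    Ex q (fun c => Ex r (fun d => F c d)) = Ex r (fun d => Ex q (fun c => F c d)) := by
  simp only [Ex, Finset.mul_sum]
  rw [Finset.sum_comm]
  exact Finset.sum_congr rfl fun c _ => Finset.sum_congr rfl fun d _ => by ring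

lemma Ex_exists (q : A → ℝ) (hq : ∀ a, 0 ≤ q a) (hq1 : ∑ a, q a = 1) (F : (ι → A) → ℝ) (b : ℝ)
    (h : Ex q F ≤ b) : ∃ c, F c ≤ b := by
  by_contra hc
  push Not at hc
  have h0 : ∑ c : ι → A, (∏ i, q (c i)) * b < Ex q F := by
    apply Finset.sum_lt_sum
    · intro c _
      exact mul_le_mul_of_nonneg_left (hc c).le (Finset.prod_nonneg fun i _ => hq _)
    · by_contra hn
      push Not at hn
      have hz : ∀ c : ι → A, ∏ i, q (c i) = 0 := by
        intro c
        by_contra hne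
        have hp : 0 < ∏ i, q (c i) := lt_of_le_of_ne (Finset.prod_nonneg fun i _ => hq _) (Ne.symm hne)
        have := hn c (Finset.mem_univ _)
        have := le_of_mul_le_mul_left this hp
        linarith [hc c]
      have := sum_prod_one (ι := ι) q hq1
      simp [hz] at this
  rw [← Finset.sum_mul, sum_prod_one q hq1, one_mul] at h0
  linarith

lemma Ex_conf {Y : Type*} [Fintype Y] (q : A → ℝ) (hq : ∀ a, 0 ≤ q a) (hq1 : ∑ a, q a = 1)
    (N G : A → Y → ℝ) (hN : ∀ a y, 0 ≤ N a y) (hN1 : ∀ a, ∑ y, N a y = 1) (κ : ℝ)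
    (hG : ∀ y, ∑ a, q a * G a y ≤ κ) {i j : ι} (hij : i ≠ j) :
    Ex q (fun c => ∑ y, N (c i) y * G (c j) y) ≤ κ := by
  rw [Ex_sum]
  calc ∑ y, Ex q (fun c : ι → A => N (c i) y * G (c j) y)
      = ∑ y, (∑ a, q a * N a y) * (∑ a, q a * G a y) :=
        Finset.sum_congr rfl fun y _ => Ex_two q hq1 hij (fun a => N a y) (fun a => G a y)
    _ ≤ ∑ y, (∑ a, q a * N a y) * κ := Finset.sum_le_sum fun y _ =>
        mul_le_mul_of_nonneg_left (hG y) (Finset.sum_nonneg fun a _ => mul_nonneg (hq a) (hN a y))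
    _ = κ := by
        rw [← Finset.sum_mul, Finset.sum_comm]
        simp_rw [← Finset.mul_sum, hN1]
        simp [hq1]

lemma Ex_sq (q : A → ℝ) (hq : ∑ a, q a = 1) (f g : A → ℝ) :
    Ex q (fun c : ι → A => (∑ i, f (c i)) * (∑ i, g (c i))) =
      (Fintype.card ι : ℝ) * (∑ a, q a * (f a * g a)) +
      (Fintype.card ι : ℝ) * ((Fintype.card ι : ℝ) - 1) * ((∑ a, q a * f a) * (∑ a, q a * g a)) := by
  have h0 : (fun c : ι → A => (∑ i, f (c i)) * (∑ i, g (c i))) =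
      fun c : ι → A => ∑ i, ∑ j, f (c i) * g (c j) := by
    funext c; rw [Finset.sum_mul_sum]
  rw [h0, Ex_sum]
  have : ∀ i : ι, Ex q (fun c : ι → A => ∑ j, f (c i) * g (c j)) = (∑ a, q a * (f a * g a)) +
      ((Fintype.card ι : ℝ) - 1) * ((∑ a, q a * f a) * (∑ a, q a * g a)) := by
    intro i
    rw [Ex_sum, ← Finset.add_sum_erase _ _ (Finset.mem_univ i), Ex_one q hq i (fun a => f a * g a)]
    congr 1
    rw [Finset.sum_congr rfl (g := fun _ => (∑ a, q a * f a) * (∑ a, q a * g a))]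
    · rw [Finset.sum_const, Finset.card_erase_of_mem (Finset.mem_univ i), nsmul_eq_mul,
        Finset.card_univ, Nat.cast_sub (Fintype.card_pos_iff.mpr ⟨i⟩)]
      simp
    · intro j hj
      exact Ex_two q hq (Finset.ne_of_mem_erase hj).symm f g
  simp_rw [this]
  rw [Finset.sum_const, nsmul_eq_mul, Finset.card_univ]
  ring

end ExLemmas

lemma cover {V : Type*} [Fintype V] (q : V → ℝ) (hq : ∀ v, 0 ≤ q v) (hq1 : ∑ v, q v = 1)
    (t ψ : V → ℝ) (K : ℝ) (ht : ∀ v, 0 ≤ t v) (htK : ∀ v, t v ≤ K) (ht1 : ∑ v, q v * t v ≤ 1)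
    (hψ : ∀ v, 0 ≤ ψ v) (hψ1 : ∀ v, ψ v ≤ 1) (L : ℕ) (hL : 0 < L) (m : (Fin L → V) → ℝ)
    (hm : ∀ c l, ψ (c l) ≤ m c) :
    ∑ v, q v * (t v * ψ v) - K / L ≤ Ex q m := by
  have hL' : (0:ℝ) < L := by exact_mod_cast hL
  have hL1 : (1:ℝ) ≤ L := by exact_mod_cast hL
  set A := ∑ v, q v * (t v * ψ v) with hA
  have hA0 : 0 ≤ A := Finset.sum_nonneg fun v _ => mul_nonneg (hq v) (mul_nonneg (ht v) (hψ v))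
  have hA1 : A ≤ 1 := le_trans (Finset.sum_le_sum fun v _ => mul_le_mul_of_nonneg_left
    (mul_le_of_le_one_right (ht v) (hψ1 v)) (hq v)) ht1
  have hT0 : 0 ≤ ∑ v, q v * t v := Finset.sum_nonneg fun v _ => mul_nonneg (hq v) (ht v)
  have hpt : ∀ c : Fin L → V, 2 * (L:ℝ) * (∑ l, t (c l) * ψ (c l)) +
      (-1) * ((∑ l, t (c l) * ψ (c l)) * (∑ l, t (c l))) ≤ (L:ℝ)^2 * m c := by
    intro c
    have hm0 : 0 ≤ m c := le_trans (hψ _) (hm c ⟨0, hL⟩)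
    set D := ∑ l, t (c l)
    set B := ∑ l, t (c l) * ψ (c l) with hB
    have hB0 : 0 ≤ B := Finset.sum_nonneg fun l _ => mul_nonneg (ht _) (hψ _)
    have hD : B ≤ D * m c := by
      rw [hB, Finset.sum_mul]
      exact Finset.sum_le_sum fun l _ => mul_le_mul_of_nonneg_left (hm c l) (ht _)
    have e : 2 * (L:ℝ) * B + (-1) * (B * D) = B * (2 * L - D) := by ring
    rw [e]
    rcases le_total 0 (2 * (L:ℝ) - D) with h | h
    · calc B * (2 * L - D) ≤ D * m c * (2 * L - D) := mul_le_mul_of_nonneg_right hD h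
        _ ≤ (L:ℝ)^2 * m c := by nlinarith [mul_nonneg hm0 (sq_nonneg ((L:ℝ) - D))]
    · have : B * (2 * L - D) ≤ 0 := mul_nonpos_of_nonneg_of_nonpos hB0 h
      have : 0 ≤ (L:ℝ)^2 * m c := by positivity
      linarith
  have hE := Ex_mono q hq hpt
  rw [Ex_add, Ex_smul, Ex_smul, Ex_smul, Ex_sum, Ex_sq q hq1 (fun v => t v * ψ v) t] at hE
  simp only [Fintype.card_fin] at hE
  have h1 : ∀ l : Fin L, Ex q (fun c : Fin L → V => t (c l) * ψ (c l)) = A :=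
    fun l => Ex_one q hq1 l (fun v => t v * ψ v)
  simp only [h1, Finset.sum_const, Finset.card_univ, Fintype.card_fin, nsmul_eq_mul] at hE
  have h2 : ∑ a, q a * (t a * ψ a * t a) ≤ K * A := by
    rw [hA, Finset.mul_sum]
    refine Finset.sum_le_sum fun v _ => ?_
    have : (q v * (t v * ψ v)) * t v ≤ (q v * (t v * ψ v)) * K :=
      mul_le_mul_of_nonneg_left (htK v) (mul_nonneg (hq v) (mul_nonneg (ht v) (hψ v)))
    linarith
  have hK : 0 ≤ K := by
    have : Nonempty V := by
      by_contra hn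
      rw [not_nonempty_iff] at hn
      simp at hq1
    exact le_trans (ht (Classical.arbitrary V)) (htK _)
  have h3 : A * ∑ a, q a * t a ≤ A := mul_le_of_le_one_right hA0 ht1
  have h4 : (L:ℝ) * (∑ a, q a * (t a * ψ a * t a)) ≤ L * K := by
    apply mul_le_mul_of_nonneg_left _ hL'.le
    exact h2.trans (mul_le_of_le_one_right hK hA1)
  have h5 : (L:ℝ) * (L - 1) * (A * ∑ a, q a * t a) ≤ L * L * A := by
    have : (L:ℝ) * (L - 1) * (A * ∑ a, q a * t a) ≤ L * (L-1) * A :=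
      mul_le_mul_of_nonneg_left h3 (mul_nonneg hL'.le (by linarith))
    nlinarith
  have h6 : (L:ℝ)^2 * (A - K / L) ≤ (L:ℝ)^2 * Ex q m := by
    have : (L:ℝ)^2 * (A - K / L) = L * L * A - L * K := by field_simp
    rw [this]
    linarith
  exact le_of_mul_le_mul_left h6 (by positivity)

section OneShot
variable {S V X Y1 Y2 : Type*} [Fintype S] [Fintype V] [Fintype X] [Fintype Y1] [Fintype Y2]

lemma oneshot [Nonempty X] (M1 M2 L : ℕ) (hM1 : 0 < M1) (hM2 : 0 < M2) (hL : 0 < L)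
    (qS : S → ℝ) (qV : V → ℝ) (p : S → V → ℝ) (pX : V → X → ℝ) (W : X → S → Y1 → Y2 → ℝ)
    (hqS : ∀ s, 0 ≤ qS s) (hqS1 : ∑ s, qS s = 1) (hqV : ∀ v, 0 ≤ qV v) (hqV1 : ∑ v, qV v = 1)
    (hp : ∀ s v, 0 ≤ p s v) (hpS : ∀ s, ∑ v, p s v = qS s) (hpV : ∀ s v, p s v ≤ qV v)
    (hpX : ∀ v x, 0 ≤ pX v x) (hpX1 : ∀ v, ∑ x, pX v x = 1)
    (hW : ∀ x s y1 y2, 0 ≤ W x s y1 y2) (hW1 : ∀ x s, ∑ y1, ∑ y2, W x s y1 y2 = 1)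
    (T1 : V → Y1 → Prop) (T2 : S → Y2 → Prop) (κ1 κ2 K : ℝ) (hK : 0 ≤ K)
    (h1 : ∀ y, ∑ v, qV v * ind (T1 v y) ≤ κ1) (h2 : ∀ y, ∑ s, qS s * ind (T2 s y) ≤ κ2) :
    ∃ (f1 : Fin M1 → Fin M2 → X) (f2 : Fin M2 → S) (g1 : Y1 → Fin M1) (g2 : Y2 → Fin M2),
      ∑ w1, ∑ w2, ∑ y1, ∑ y2, W (f1 w1 w2) (f2 w2) y1 y2 *
        ((if g1 y1 = w1 then 0 else 1) + (if g2 y2 = w2 then 0 else 1)) ≤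
      (M1 * M2 : ℝ) * (2 * (∑ s, ∑ v, p s v * (∑ x, pX v x * ∑ y1, ∑ y2, W x s y1 y2 *
            ind (¬ T1 v y1 ∨ ¬ T2 s y2)) + ∑ s, ∑ v, p s v * ind (K * (qS s * qV v) < p s v) + K / L)
        + (M1 - 1) * (L * κ1) + (M2 - 1) * κ2) := by
  set φ : S → V → X → ℝ := fun s v x => ∑ y1, ∑ y2, W x s y1 y2 * ind (¬ T1 v y1 ∨ ¬ T2 s y2)
    with hφ
  have hφ0 : ∀ s v x, 0 ≤ φ s v x := fun s v x => Finset.sum_nonneg fun y1 _ =>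
    Finset.sum_nonneg fun y2 _ => mul_nonneg (hW _ _ _ _) (ind_nonneg _)
  have hφ1 : ∀ s v x, φ s v x ≤ 1 := by
    intro s v x
    rw [← hW1 x s]
    exact Finset.sum_le_sum fun y1 _ => Finset.sum_le_sum fun y2 _ =>
      mul_le_of_le_one_right (hW _ _ _ _) (ind_le_one _)
  have : Nonempty (Fin L) := ⟨⟨0, hL⟩⟩
  have henc : ∀ (c : Fin L → V) (s : S), ∃ lx : Fin L × X, ∀ lx' : Fin L × X,
      φ s (c lx.1) lx.2 ≤ φ s (c lx'.1) lx'.2 := fun c s =>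
    Finite.exists_min (fun lx : Fin L × X => φ s (c lx.1) lx.2)
  choose enc henc using henc
  set rw' : (Fin L → V) → ℝ := fun c => ∏ l, qV (c l) with hrw
  have hrw0 : ∀ c, 0 ≤ rw' c := fun c => Finset.prod_nonneg fun _ _ => hqV _
  have hrw1 : ∑ c, rw' c = 1 := sum_prod_one qV hqV1
  -- cost functions
  set c0 : (Fin L → V) → S → ℝ := fun r s => φ s (r (enc r s).1) (enc r s).2 with hc0
  set P : (Fin L → V) → S → Y1 → Y2 → ℝ := fun r s y1 y2 => W (enc r s).2 s y1 y2 with hP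
  set G : (Fin L → V) → Y1 → ℝ := fun r y1 => ∑ l, ind (T1 (r l) y1) with hG
  have hG0 : ∀ r y, 0 ≤ G r y := fun r y => Finset.sum_nonneg fun _ _ => ind_nonneg _
  have hGκ : ∀ y, ∑ r, rw' r * G r y ≤ L * κ1 := by
    intro y
    have : ∑ r, rw' r * G r y = Ex qV (fun r : Fin L → V => ∑ l, ind (T1 (r l) y)) := rfl
    rw [this, Ex_sum]
    calc ∑ l : Fin L, Ex qV (fun r : Fin L → V => ind (T1 (r l) y))
        ≤ ∑ l : Fin L, κ1 := Finset.sum_le_sum fun l _ => by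
          rw [Ex_one qV hqV1 l (fun v => ind (T1 v y))]; exact h1 y
      _ = L * κ1 := by simp
  set e := ∑ s, ∑ v, p s v * (∑ x, pX v x * φ s v x) with he
  set δ := ∑ s, ∑ v, p s v * ind (K * (qS s * qV v) < p s v) with hδ
  -- covering
  have hcov : ∑ s, qS s * Ex qV (fun r => c0 r s) ≤ e + δ + K / L := by
    have hs : ∀ s, qS s * Ex qV (fun r => c0 r s) ≤ (∑ v, p s v * (∑ x, pX v x * φ s v x)) +
        (∑ v, p s v * ind (K * (qS s * qV v) < p s v)) + qS s * (K / L) := by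
      intro s
      rcases (hqS s).eq_or_lt with h0 | hpos
      · rw [← h0]
        have := Finset.sum_nonneg fun v (_ : v ∈ Finset.univ) => mul_nonneg (hp s v)
          (Finset.sum_nonneg fun x (_ : x ∈ Finset.univ) => mul_nonneg (hpX v x) (hφ0 s v x))
        have := Finset.sum_nonneg fun v (_ : v ∈ Finset.univ) => mul_nonneg (hp s v)
          (ind_nonneg (K * (qS s * qV v) < p s v))
        rw [← h0] at this
        linarith
      · set φm : V → ℝ := fun v => ∑ x, pX v x * φ s v x with hφm
        have hm0 : ∀ v, 0 ≤ φm v := fun v => Finset.sum_nonneg fun x _ =>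
          mul_nonneg (hpX v x) (hφ0 s v x)
        have hm1 : ∀ v, φm v ≤ 1 := fun v => by
          rw [← hpX1 v]
          exact Finset.sum_le_sum fun x _ => mul_le_of_le_one_right (hpX v x) (hφ1 s v x)
        set t : V → ℝ := fun v => p s v / (qS s * qV v) * ind (¬ (K * (qS s * qV v) < p s v)) with ht
        have hqt : ∀ v, qV v * t v = p s v * ind (¬ (K * (qS s * qV v) < p s v)) / qS s := by
          intro v
          rcases (hqV v).eq_or_lt with h0 | hv
          · have : p s v = 0 := le_antisymm (h0 ▸ hpV s v) (hp s v)
            simp [← h0, this]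
          · simp only [ht]; field_simp
        have hqt' : ∀ v, qV v * t v = (p s v - p s v * ind (K * (qS s * qV v) < p s v)) / qS s := by
          intro v
          rw [hqt]
          by_cases h : K * (qS s * qV v) < p s v
          · rw [ind_pos h, ind_neg (not_not.mpr h)]; simp
          · rw [ind_neg h, ind_pos h]; simp
        have hcv := cover qV hqV hqV1 t (fun v => 1 - φm v) K
          (fun v => mul_nonneg (div_nonneg (hp s v) (mul_nonneg (hqS s) (hqV v))) (ind_nonneg _))
          (by
            intro v
            by_cases h : K * (qS s * qV v) < p s v
            · simp only [ht]; rw [ind_neg (not_not.mpr h)]; simpa using hK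
            · simp only [ht]; rw [ind_pos h, mul_one]
              rcases (mul_nonneg (hqS s) (hqV v)).eq_or_lt with h0 | hv
              · rw [← h0]; simpa using hK
              · rw [div_le_iff₀ hv]; exact not_lt.mp h)
          (by
            simp_rw [hqt, ← Finset.sum_div]
            rw [div_le_one hpos, ← hpS s]
            exact Finset.sum_le_sum fun v _ => mul_le_of_le_one_right (hp s v) (ind_le_one _))
          (fun v => by linarith [hm1 v]) (fun v => by linarith [hm0 v]) L hL
          (fun r => 1 + (-1) * c0 r s)
          (by
            intro r l
            have : c0 r s ≤ φm (r l) := by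
              calc c0 r s = ∑ x, pX (r l) x * c0 r s := by rw [← Finset.sum_mul, hpX1, one_mul]
                _ ≤ φm (r l) := Finset.sum_le_sum fun x _ =>
                  mul_le_mul_of_nonneg_left (henc r s (l, x)) (hpX _ _)
            linarith)
        rw [Ex_add, Ex_const qV hqV1, Ex_smul] at hcv
        have hlow : 1 - (∑ v, p s v * φm v) / qS s - (∑ v, p s v * ind (K * (qS s * qV v) < p s v)) / qS s
            ≤ ∑ v, qV v * (t v * (1 - φm v)) := by
          have h1' : (1:ℝ) = (∑ v, p s v) / qS s := by rw [hpS, div_self hpos.ne']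
          conv_lhs => rw [h1']
          rw [← sub_div, ← sub_div, ← Finset.sum_sub_distrib, ← Finset.sum_sub_distrib, Finset.sum_div]
          refine Finset.sum_le_sum fun v _ => ?_
          rw [← mul_assoc (qV v), hqt', div_mul_eq_mul_div]
          apply div_le_div_of_nonneg_right _ hpos.le
          nlinarith [mul_nonneg (mul_nonneg (hp s v) (ind_nonneg (K * (qS s * qV v) < p s v))) (hm0 v)]
        have : Ex qV (fun r => c0 r s) ≤ (∑ v, p s v * φm v) / qS s +
          (∑ v, p s v * ind (K * (qS s * qV v) < p s v)) / qS s + K / L := by linarith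
        calc qS s * Ex qV (fun r => c0 r s) ≤ qS s * ((∑ v, p s v * φm v) / qS s +
          (∑ v, p s v * ind (K * (qS s * qV v) < p s v)) / qS s + K / L) :=
            mul_le_mul_of_nonneg_left this hpos.le
          _ = _ := by rw [mul_add, mul_add, mul_div_cancel₀ _ hpos.ne', mul_div_cancel₀ _ hpos.ne']
    calc _ ≤ _ := Finset.sum_le_sum fun s _ => hs s
      _ = _ := by
        rw [Finset.sum_add_distrib, Finset.sum_add_distrib, ← Finset.sum_mul, hqS1, one_mul]
  -- the total cost
  set J1 : (Fin M2 → S) → (Fin M1 → Fin L → V) → Fin M1 → Fin M2 → ℝ := fun cs cv w1 w2 =>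
    ∑ w' ∈ Finset.univ.erase w1, ∑ y1, (∑ y2, P (cv w1) (cs w2) y1 y2) * G (cv w') y1 with hJ1
  set J2 : (Fin M2 → S) → (Fin M1 → Fin L → V) → Fin M1 → Fin M2 → ℝ := fun cs cv w1 w2 =>
    ∑ w' ∈ Finset.univ.erase w2, ∑ y2, (∑ y1, P (cv w1) (cs w2) y1 y2) * ind (T2 (cs w') y2) with hJ2
  set J : (Fin M2 → S) → (Fin M1 → Fin L → V) → ℝ := fun cs cv =>
    ∑ w1, ∑ w2, (2 * c0 (cv w1) (cs w2) + J1 cs cv w1 w2 + J2 cs cv w1 w2) with hJ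
  have hEJ : Ex qS (fun cs => Ex rw' (fun cv => J cs cv)) ≤
      (M1 * M2 : ℝ) * (2 * (e + δ + K / L) + (M1 - 1) * (L * κ1) + (M2 - 1) * κ2) := by
    simp only [hJ, Ex_sum]
    calc _ ≤ ∑ w1 : Fin M1, ∑ w2 : Fin M2,
        (2 * (e + δ + K / L) + (M1 - 1) * (L * κ1) + (M2 - 1) * κ2) := ?_
      _ = _ := by simp; ring
    refine Finset.sum_le_sum fun w1 _ => Finset.sum_le_sum fun w2 _ => ?_
    simp only [Ex_add, Ex_smul]
    refine add_le_add (add_le_add ?_ ?_) ?_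
    · refine mul_le_mul_of_nonneg_left ?_ (by norm_num)
      have : ∀ cs : Fin M2 → S, Ex rw' (fun cv : Fin M1 → Fin L → V => c0 (cv w1) (cs w2)) =
          Ex qV (fun r => c0 r (cs w2)) := fun cs => Ex_one rw' hrw1 w1 (fun r => c0 r (cs w2))
      simp only [this]
      rw [Ex_one qS hqS1 w2 (fun s => Ex qV (fun r => c0 r s))]
      exact hcov
    · rw [← Ex_const (ι := Fin M2) qS hqS1 (((M1:ℝ) - 1) * (L * κ1))]
      refine Ex_mono qS hqS fun cs => ?_
      simp only [hJ1, Ex_sum]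
      calc _ ≤ ∑ w' ∈ Finset.univ.erase w1, (L * κ1) := ?_
        _ = _ := by
          rw [Finset.sum_const, Finset.card_erase_of_mem (Finset.mem_univ _)]
          simp [Nat.cast_sub hM1]
      refine Finset.sum_le_sum fun w' hw' => ?_
      rw [← Ex_sum]
      exact Ex_conf rw' hrw0 hrw1 (fun r y1 => ∑ y2, P r (cs w2) y1 y2) G
        (fun r y1 => Finset.sum_nonneg fun _ _ => hW _ _ _ _) (fun r => hW1 _ _) _ hGκ
        (Finset.ne_of_mem_erase hw').symm
    · rw [Ex_comm, ← Ex_const (ι := Fin M1) rw' hrw1 (((M2:ℝ) - 1) * κ2)]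
      refine Ex_mono rw' hrw0 fun cv => ?_
      simp only [hJ2, Ex_sum]
      calc _ ≤ ∑ w' ∈ Finset.univ.erase w2, κ2 := ?_
        _ = _ := by
          rw [Finset.sum_const, Finset.card_erase_of_mem (Finset.mem_univ _)]
          simp [Nat.cast_sub hM2]
      refine Finset.sum_le_sum fun w' hw' => ?_
      rw [← Ex_sum]
      exact Ex_conf qS hqS hqS1 (fun s y2 => ∑ y1, P (cv w1) s y1 y2) (fun s y2 => ind (T2 s y2))
        (fun r y1 => Finset.sum_nonneg fun _ _ => hW _ _ _ _)
        (fun s => by rw [Finset.sum_comm]; exact hW1 _ _) _ h2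
        (Finset.ne_of_mem_erase hw').symm
  obtain ⟨cs, hcs⟩ := Ex_exists qS hqS hqS1 _ _ hEJ
  obtain ⟨cv, hcv⟩ := Ex_exists rw' hrw0 hrw1 _ _ hcs
  classical
  refine ⟨fun w1 w2 => (enc (cv w1) (cs w2)).2, cs,
    fun y1 => if h : ∃ w1, ∃ l, T1 (cv w1 l) y1 then h.choose else ⟨0, hM1⟩,
    fun y2 => if h : ∃ w2, T2 (cs w2) y2 then h.choose else ⟨0, hM2⟩, le_trans ?_ hcv⟩
  set g1 : Y1 → Fin M1 := fun y1 => if h : ∃ w1, ∃ l, T1 (cv w1 l) y1 then h.choose else ⟨0, hM1⟩ with hg1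
  set g2 : Y2 → Fin M2 := fun y2 => if h : ∃ w2, T2 (cs w2) y2 then h.choose else ⟨0, hM2⟩ with hg2
  refine Finset.sum_le_sum fun w1 _ => Finset.sum_le_sum fun w2 _ => ?_
  have hcong : 2 * c0 (cv w1) (cs w2) + J1 cs cv w1 w2 + J2 cs cv w1 w2 =
      ∑ y1, ∑ y2, P (cv w1) (cs w2) y1 y2 *
        (2 * ind (¬ T1 (cv w1 (enc (cv w1) (cs w2)).1) y1 ∨ ¬ T2 (cs w2) y2)
          + ∑ w' ∈ Finset.univ.erase w1, G (cv w') y1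
          + ∑ w' ∈ Finset.univ.erase w2, ind (T2 (cs w') y2)) := by
    simp only [mul_add, Finset.sum_add_distrib]
    congr 1
    · congr 1
      · simp only [hc0, hφ, hP, Finset.mul_sum]
        exact Finset.sum_congr rfl fun _ _ => Finset.sum_congr rfl fun _ _ => by ring
      · simp only [hJ1, Finset.mul_sum, Finset.sum_mul]
        rw [Finset.sum_comm]
        exact Finset.sum_congr rfl fun _ _ => Finset.sum_comm
    · simp only [hJ2, Finset.mul_sum, Finset.sum_mul]
      rw [Finset.sum_comm, Finset.sum_comm (s := (Finset.univ : Finset Y1))]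
      refine Finset.sum_congr rfl fun _ _ => ?_
      rw [Finset.sum_comm]
  rw [hcong]
  refine Finset.sum_le_sum fun y1 _ => Finset.sum_le_sum fun y2 _ => ?_
  refine mul_le_mul_of_nonneg_left ?_ (hW _ _ _ _)
  have hbad0 := ind_nonneg (¬ T1 (cv w1 (enc (cv w1) (cs w2)).1) y1 ∨ ¬ T2 (cs w2) y2)
  have hs1 : 0 ≤ ∑ w' ∈ Finset.univ.erase w1, G (cv w') y1 := Finset.sum_nonneg fun _ _ => hG0 _ _
  have hs2 : 0 ≤ ∑ w' ∈ Finset.univ.erase w2, ind (T2 (cs w') y2) :=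
    Finset.sum_nonneg fun _ _ => ind_nonneg _
  have e1 : (if g1 y1 = w1 then (0:ℝ) else 1) ≤
      ind (¬ T1 (cv w1 (enc (cv w1) (cs w2)).1) y1 ∨ ¬ T2 (cs w2) y2) +
      ∑ w' ∈ Finset.univ.erase w1, G (cv w') y1 := by
    split_ifs with hg
    · linarith
    · by_cases hT : T1 (cv w1 (enc (cv w1) (cs w2)).1) y1
      · have hex : ∃ w1, ∃ l, T1 (cv w1 l) y1 := ⟨_, _, hT⟩
        have hgv : g1 y1 = hex.choose := by simp only [hg1]; rw [dif_pos hex]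
        obtain ⟨l, hl⟩ := hex.choose_spec
        rw [← hgv] at hl
        have a1 : G (cv (g1 y1)) y1 ≤ ∑ w' ∈ Finset.univ.erase w1, G (cv w') y1 :=
          Finset.single_le_sum (f := fun w' => G (cv w') y1) (fun _ _ => hG0 _ _)
            (Finset.mem_erase.mpr ⟨hg, Finset.mem_univ _⟩)
        have a2 : ind (T1 (cv (g1 y1) l) y1) ≤ G (cv (g1 y1)) y1 :=
          Finset.single_le_sum (f := fun l => ind (T1 (cv (g1 y1) l) y1))
            (fun _ _ => ind_nonneg _) (Finset.mem_univ l)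
        rw [ind_pos hl] at a2
        linarith
      · rw [ind_pos (Or.inl hT)]; linarith
  have e2 : (if g2 y2 = w2 then (0:ℝ) else 1) ≤
      ind (¬ T1 (cv w1 (enc (cv w1) (cs w2)).1) y1 ∨ ¬ T2 (cs w2) y2) +
      ∑ w' ∈ Finset.univ.erase w2, ind (T2 (cs w') y2) := by
    split_ifs with hg
    · linarith
    · by_cases hT : T2 (cs w2) y2
      · have hex : ∃ w2, T2 (cs w2) y2 := ⟨_, hT⟩
        have hgv : g2 y2 = hex.choose := by simp only [hg2]; rw [dif_pos hex]
        have hl := hex.choose_spec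
        rw [← hgv] at hl
        have a1 : ind (T2 (cs (g2 y2)) y2) ≤ ∑ w' ∈ Finset.univ.erase w2, ind (T2 (cs w') y2) :=
          Finset.single_le_sum (f := fun w' => ind (T2 (cs w') y2)) (fun _ _ => ind_nonneg _)
            (Finset.mem_erase.mpr ⟨hg, Finset.mem_univ _⟩)
        rw [ind_pos hl] at a1
        linarith
      · rw [ind_pos (Or.inr hT)]; linarith
  linarith

end OneShot

section Laws
variable {Ω A B : Type*} [Fintype Ω] [Fintype A] [Fintype B] [DecidableEq A] [DecidableEq B]

lemma sum_pi_prod {ι : Type*} [Fintype ι] [DecidableEq ι] (h : ι → A → ℝ) :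
    ∑ y : ι → A, ∏ i, h i (y i) = ∏ i, ∑ b, h i b := by
  rw [Finset.prod_univ_sum, Fintype.piFinset_univ]

lemma lawOf_nonneg (μ : Ω → ℝ) (hμ : ∀ ω, 0 ≤ μ ω) (f : Ω → A) (a : A) : 0 ≤ lawOf μ f a :=
  Finset.sum_nonneg fun ω _ => by split_ifs <;> simp [hμ]

lemma lawOf_sum (μ : Ω → ℝ) (f : Ω → A) : ∑ a, lawOf μ f a = ∑ ω, μ ω := by
  unfold lawOf
  rw [Finset.sum_comm]
  simp

lemma lawOf_sum_mul (μ : Ω → ℝ) (f : Ω → A) (h : A → ℝ) :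
    ∑ a, lawOf μ f a * h a = ∑ ω, μ ω * h (f ω) := by
  unfold lawOf
  simp_rw [Finset.sum_mul]
  rw [Finset.sum_comm]
  simp

lemma lawOf_marg_right (μ : Ω → ℝ) (f : Ω → A) (g : Ω → B) (a : A) :
    ∑ b, lawOf μ (fun ω => (f ω, g ω)) (a, b) = lawOf μ f a := by
  unfold lawOf
  rw [Finset.sum_comm]
  refine Finset.sum_congr rfl fun ω _ => ?_
  by_cases h : f ω = a <;> simp [h]

lemma lawOf_marg_left (μ : Ω → ℝ) (f : Ω → A) (g : Ω → B) (b : B) :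
    ∑ a, lawOf μ (fun ω => (f ω, g ω)) (a, b) = lawOf μ g b := by
  unfold lawOf
  rw [Finset.sum_comm]
  refine Finset.sum_congr rfl fun ω _ => ?_
  by_cases h : g ω = b <;> simp [h]

lemma lawOf_le_left (μ : Ω → ℝ) (hμ : ∀ ω, 0 ≤ μ ω) (f : Ω → A) (g : Ω → B) (a : A) (b : B) :
    lawOf μ (fun ω => (f ω, g ω)) (a, b) ≤ lawOf μ f a := by
  rw [← lawOf_marg_right μ f g a]
  exact Finset.single_le_sum (f := fun b => lawOf μ (fun ω => (f ω, g ω)) (a, b))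
    (fun _ _ => lawOf_nonneg μ hμ _ _) (Finset.mem_univ b)

lemma lawOf_le_right (μ : Ω → ℝ) (hμ : ∀ ω, 0 ≤ μ ω) (f : Ω → A) (g : Ω → B) (a : A) (b : B) :
    lawOf μ (fun ω => (f ω, g ω)) (a, b) ≤ lawOf μ g b := by
  rw [← lawOf_marg_left μ f g b]
  exact Finset.single_le_sum (f := fun a => lawOf μ (fun ω => (f ω, g ω)) (a, b))
    (fun _ _ => lawOf_nonneg μ hμ _ _) (Finset.mem_univ a)

lemma lawOf_pos (μ : Ω → ℝ) (hμ : ∀ ω, 0 ≤ μ ω) (f : Ω → A) (ω : Ω) (h : 0 < μ ω) :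
    0 < lawOf μ f (f ω) := by
  have := Finset.single_le_sum (f := fun ω' => if f ω' = f ω then μ ω' else 0)
    (fun ω' _ => by split_ifs <;> simp [hμ]) (Finset.mem_univ ω)
  simp only [if_true] at this
  exact lt_of_lt_of_le h this

/-- The joint law of a pair. -/
def jl (μ : Ω → ℝ) (f : Ω → A) (g : Ω → B) (a : A) (b : B) : ℝ :=
  lawOf μ (fun ω => (f ω, g ω)) (a, b)

/-- Information density. -/
def idens (μ : Ω → ℝ) (f : Ω → A) (g : Ω → B) (ω : Ω) : ℝ :=
  Real.logb 2 (jl μ f g (f ω) (g ω) / (lawOf μ f (f ω) * lawOf μ g (g ω)))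

lemma entRV_eq (μ : Ω → ℝ) (f : Ω → A) :
    entRV μ f = - ∑ ω, μ ω * Real.logb 2 (lawOf μ f (f ω)) := by
  unfold entRV ent
  rw [lawOf_sum_mul μ f (fun a => Real.logb 2 (lawOf μ f a))]

lemma miRV_eq (μ : Ω → ℝ) (hμ : ∀ ω, 0 ≤ μ ω) (f : Ω → A) (g : Ω → B) :
    miRV μ f g = ∑ ω, μ ω * idens μ f g ω := by
  unfold miRV
  rw [entRV_eq, entRV_eq, entRV_eq, ← Finset.sum_neg_distrib, ← Finset.sum_neg_distrib,
    ← Finset.sum_add_distrib, sub_neg_eq_add, ← Finset.sum_add_distrib]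
  refine Finset.sum_congr rfl fun ω _ => ?_
  rcases (hμ ω).eq_or_lt with h | h
  · simp [← h]
  · have h1 := lawOf_pos μ hμ f ω h
    have h2 := lawOf_pos μ hμ g ω h
    have h3 := lawOf_pos μ hμ (fun ω => (f ω, g ω)) ω h
    unfold idens jl
    rw [Real.logb_div h3.ne' (mul_pos h1 h2).ne', Real.logb_mul h1.ne' h2.ne']
    ring

lemma miRV_nonneg (μ : Ω → ℝ) (hμ : ∀ ω, 0 ≤ μ ω) (hμ1 : ∑ ω, μ ω = 1) (f : Ω → A) (g : Ω → B) :
    0 ≤ miRV μ f g := by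
  rw [miRV_eq μ hμ]
  have hl2 : 0 < Real.log 2 := Real.log_pos (by norm_num)
  -- compare with 1 - pq/p
  set R : A × B → ℝ := fun ab => lawOf μ f ab.1 * lawOf μ g ab.2 / jl μ f g ab.1 ab.2 with hR
  have h1 : ∀ ω, μ ω * ((1 - R (f ω, g ω)) / Real.log 2) ≤ μ ω * idens μ f g ω := by
    intro ω
    rcases (hμ ω).eq_or_lt with h | h
    · simp [← h]
    · apply mul_le_mul_of_nonneg_left _ (hμ ω)
      have h1 := lawOf_pos μ hμ f ω h
      have h2 := lawOf_pos μ hμ g ω h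
      have h3 : 0 < jl μ f g (f ω) (g ω) := lawOf_pos μ hμ (fun ω => (f ω, g ω)) ω h
      unfold idens Real.logb
      apply div_le_div_of_nonneg_right _ hl2.le
      have := Real.one_sub_inv_le_log_of_pos (div_pos h3 (mul_pos h1 h2))
      rwa [inv_div] at this
  refine le_trans ?_ (Finset.sum_le_sum fun ω _ => h1 ω)
  have h2 : ∑ ω, μ ω * R (f ω, g ω) ≤ 1 := by
    rw [← lawOf_sum_mul μ (fun ω => (f ω, g ω)) R]
    calc _ ≤ ∑ ab : A × B, lawOf μ f ab.1 * lawOf μ g ab.2 := by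
          refine Finset.sum_le_sum fun ab _ => ?_
          rcases (lawOf_nonneg μ hμ (fun ω => (f ω, g ω)) ab).eq_or_lt with h | h
          · rw [← h, zero_mul]; exact mul_nonneg (lawOf_nonneg μ hμ _ _) (lawOf_nonneg μ hμ _ _)
          · apply le_of_eq
            exact mul_div_cancel₀ _ h.ne'
      _ = 1 := by
          rw [Fintype.sum_prod_type]
          simp_rw [← Finset.mul_sum, ← Finset.sum_mul, lawOf_sum, hμ1, one_mul]
  have : ∑ ω, μ ω * ((1 - R (f ω, g ω)) / Real.log 2) = (1 - ∑ ω, μ ω * R (f ω, g ω)) / Real.log 2 := by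
    rw [← hμ1, ← Finset.sum_sub_distrib, Finset.sum_div]
    exact Finset.sum_congr rfl fun ω _ => by rw [hμ1]; ring
  rw [this]
  exact div_nonneg (by linarith) hl2.le

lemma cheb (μ : Ω → ℝ) (hμ : ∀ ω, 0 ≤ μ ω) (hμ1 : ∑ ω, μ ω = 1) (f : Ω → ℝ) (m θ : ℝ)
    (hm : ∑ ω, μ ω * f ω = m) (hθ : 0 < θ) (n : ℕ) (hn : 0 < n) :
    Ex μ (fun ω : Fin n → Ω => ind (n * θ ≤ |∑ i, f (ω i) - n * m|)) ≤
      (∑ ω, μ ω * ((f ω - m) * (f ω - m))) / θ ^ 2 / n := by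
  have hn' : (0:ℝ) < n := by exact_mod_cast hn
  have hpt : ∀ ω : Fin n → Ω, ind (n * θ ≤ |∑ i, f (ω i) - n * m|) ≤
      (1 / (n * θ)^2) * ((∑ i, (f (ω i) - m)) * (∑ i, (f (ω i) - m))) := by
    intro ω
    have hs : ∑ i, (f (ω i) - m) = ∑ i, f (ω i) - n * m := by simp
    rw [hs]
    by_cases h : n * θ ≤ |∑ i, f (ω i) - n * m|
    · rw [ind_pos h, one_div, inv_mul_eq_div, le_div_iff₀ (by positivity), one_mul, ← abs_mul_abs_self, ← sq]
      exact pow_le_pow_left₀ (by positivity) h 2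
    · rw [ind_neg h]
      exact mul_nonneg (by positivity) (mul_self_nonneg _)
  refine (Ex_mono μ hμ hpt).trans ?_
  rw [Ex_smul, Ex_sq μ hμ1 (fun ω => f ω - m) (fun ω => f ω - m)]
  have h0 : ∑ ω, μ ω * (f ω - m) = 0 := by
    simp_rw [mul_sub]
    rw [Finset.sum_sub_distrib, hm, ← Finset.sum_mul, hμ1]; ring
  rw [h0, Fintype.card_fin]
  apply le_of_eq
  field_simp
  ring

lemma idens_prod (μ : Ω → ℝ) (hμ : ∀ ω, 0 ≤ μ ω) (f : Ω → A) (g : Ω → B) {n : ℕ} (ω : Fin n → Ω)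
    (h : ∏ i, μ (ω i) ≠ 0) :
    0 < (∏ i, lawOf μ f (f (ω i))) * ∏ i, lawOf μ g (g (ω i)) ∧
    ∏ i, jl μ f g (f (ω i)) (g (ω i)) = (2:ℝ) ^ (∑ i, idens μ f g (ω i)) *
      ((∏ i, lawOf μ f (f (ω i))) * ∏ i, lawOf μ g (g (ω i))) := by
  have hp : ∀ i, 0 < μ (ω i) := fun i => lt_of_le_of_ne (hμ _)
    (Ne.symm (Finset.prod_ne_zero_iff.mp h i (Finset.mem_univ i)))
  have h1 := fun i => lawOf_pos μ hμ f (ω i) (hp i)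
  have h2 := fun i => lawOf_pos μ hμ g (ω i) (hp i)
  have h3 : ∀ i, 0 < jl μ f g (f (ω i)) (g (ω i)) :=
    fun i => lawOf_pos μ hμ (fun ω => (f ω, g ω)) (ω i) (hp i)
  refine ⟨mul_pos (Finset.prod_pos fun i _ => h1 i) (Finset.prod_pos fun i _ => h2 i), ?_⟩
  rw [Real.rpow_sum_of_pos (by norm_num), ← Finset.prod_mul_distrib, ← Finset.prod_mul_distrib]
  refine Finset.prod_congr rfl fun i _ => ?_
  unfold idens
  rw [Real.rpow_logb (by norm_num) (by norm_num) (div_pos (h3 i) (mul_pos (h1 i) (h2 i)))]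
  exact (div_mul_cancel₀ _ (mul_pos (h1 i) (h2 i)).ne').symm

/-- Threshold event for the information density of a block. -/
def Thr (μ : Ω → ℝ) (f : Ω → A) (g : Ω → B) (r : ℝ) {n : ℕ} (a : Fin n → A) (b : Fin n → B) : Prop :=
  (2:ℝ) ^ ((n:ℝ) * r) * ((∏ i, lawOf μ f (a i)) * ∏ i, lawOf μ g (b i)) < ∏ i, jl μ f g (a i) (b i)

lemma Thr_iff (μ : Ω → ℝ) (hμ : ∀ ω, 0 ≤ μ ω) (f : Ω → A) (g : Ω → B) (r : ℝ) {n : ℕ} (ω : Fin n → Ω)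
    (h : ∏ i, μ (ω i) ≠ 0) :
    Thr μ f g r (fun i => f (ω i)) (fun i => g (ω i)) ↔ n * r < ∑ i, idens μ f g (ω i) := by
  obtain ⟨h1, h2⟩ := idens_prod μ hμ f g ω h
  unfold Thr
  rw [h2, mul_lt_mul_iff_left₀ h1, Real.rpow_lt_rpow_left_iff (by norm_num)]

lemma Ex_mono' {ι : Type*} [Fintype ι] [DecidableEq ι] (q : Ω → ℝ) (hq : ∀ a, 0 ≤ q a)
    {F G : (ι → Ω) → ℝ} (h : ∀ c, ∏ i, q (c i) ≠ 0 → F c ≤ G c) :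
    Ex q F ≤ Ex q G := by
  refine Finset.sum_le_sum fun c _ => ?_
  by_cases h0 : ∏ i, q (c i) = 0
  · simp [h0]
  · exact mul_le_mul_of_nonneg_left (h c h0) (Finset.prod_nonneg fun i _ => hq _)

lemma ind_mono {p q : Prop} (h : p → q) : ind p ≤ ind q := by
  by_cases hp : p
  · rw [ind_pos hp, ind_pos (h hp)]
  · rw [ind_neg hp]; exact ind_nonneg _

lemma Thr_lower (μ : Ω → ℝ) (hμ : ∀ ω, 0 ≤ μ ω) (hμ1 : ∑ ω, μ ω = 1) (f : Ω → A) (g : Ω → B)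
    (θ : ℝ) (hθ : 0 < θ) : ∃ C : ℝ, ∀ n : ℕ, 0 < n →
    Ex μ (fun ω : Fin n → Ω => ind (¬ Thr μ f g (miRV μ f g - θ) (fun i => f (ω i)) (fun i => g (ω i))))
      ≤ C / n := by
  refine ⟨_, fun n hn => le_trans (Ex_mono' μ hμ fun ω hω => ?_)
    (cheb μ hμ hμ1 (idens μ f g) (miRV μ f g) θ (miRV_eq μ hμ f g).symm hθ n hn)⟩
  apply ind_mono
  rw [Thr_iff μ hμ f g _ ω hω]
  intro h
  rw [not_lt] at h
  rw [abs_sub_comm]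
  refine le_trans ?_ (le_abs_self _)
  linarith

lemma Thr_upper (μ : Ω → ℝ) (hμ : ∀ ω, 0 ≤ μ ω) (hμ1 : ∑ ω, μ ω = 1) (f : Ω → A) (g : Ω → B)
    (θ : ℝ) (hθ : 0 < θ) : ∃ C : ℝ, ∀ n : ℕ, 0 < n →
    Ex μ (fun ω : Fin n → Ω => ind (Thr μ f g (miRV μ f g + θ) (fun i => f (ω i)) (fun i => g (ω i))))
      ≤ C / n := by
  refine ⟨_, fun n hn => le_trans (Ex_mono' μ hμ fun ω hω => ?_)
    (cheb μ hμ hμ1 (idens μ f g) (miRV μ f g) θ (miRV_eq μ hμ f g).symm hθ n hn)⟩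
  apply ind_mono
  rw [Thr_iff μ hμ f g _ ω hω]
  intro h
  refine le_trans ?_ (le_abs_self _)
  linarith

lemma Thr_conf (μ : Ω → ℝ) (hμ : ∀ ω, 0 ≤ μ ω) (f : Ω → A) (g : Ω → B)
    (r : ℝ) {n : ℕ} (b : Fin n → B) :
    ∑ a : Fin n → A, (∏ i, lawOf μ f (a i)) * ind (Thr μ f g r a b) ≤ (2:ℝ) ^ (-((n:ℝ) * r)) := by
  have hK : (0:ℝ) < (2:ℝ) ^ ((n:ℝ) * r) := Real.rpow_pos_of_pos (by norm_num) _
  have hs : ∑ a : Fin n → A, ∏ i, jl μ f g (a i) (b i) = ∏ i, lawOf μ g (b i) := by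
    rw [sum_pi_prod (fun i a => jl μ f g a (b i))]
    exact Finset.prod_congr rfl fun i _ => lawOf_marg_left μ f g (b i)
  have hj : ∀ a : Fin n → A, 0 ≤ ∏ i, jl μ f g (a i) (b i) :=
    fun a => Finset.prod_nonneg fun i _ => lawOf_nonneg μ hμ _ _
  have hb : 0 ≤ ∏ i, lawOf μ g (b i) := Finset.prod_nonneg fun i _ => lawOf_nonneg μ hμ _ _
  rcases hb.eq_or_lt with h0 | hpos
  · have hz : ∀ a : Fin n → A, ¬ Thr μ f g r a b := by
      intro a
      have : ∏ i, jl μ f g (a i) (b i) ≤ 0 := by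
        rw [h0, ← hs]
        exact Finset.single_le_sum (f := fun a : Fin n → A => ∏ i, jl μ f g (a i) (b i))
          (fun a _ => hj a) (Finset.mem_univ a)
      unfold Thr
      rw [← h0]
      simpa using this
    simp only [ind_neg (hz _), mul_zero, Finset.sum_const_zero]
    exact Real.rpow_nonneg (by norm_num) _
  · rw [Real.rpow_neg (by norm_num), ← one_div, le_div_iff₀ hK]
    have : (∑ a : Fin n → A, (∏ i, lawOf μ f (a i)) * ind (Thr μ f g r a b)) * (2:ℝ) ^ ((n:ℝ) * r) *
        (∏ i, lawOf μ g (b i)) ≤ 1 * (∏ i, lawOf μ g (b i)) := by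
      rw [one_mul, Finset.sum_mul, Finset.sum_mul]
      conv_rhs => rw [← hs]
      refine Finset.sum_le_sum fun a _ => ?_
      by_cases h : Thr μ f g r a b
      · rw [ind_pos h]
        unfold Thr at h
        linarith
      · rw [ind_neg h]; simpa using hj a
    exact le_of_mul_le_mul_right this hpos

end Laws

section Main
variable (ch : DMIFC X1 X2 Y1 Y2) (nU nV : ℕ)
    (pUX2 : Fin nU → X2 → ℝ) (pV : Fin nU → X2 → Fin nV → ℝ) (pX1 : Fin nV → X1 → ℝ)

lemma joint_law (hX1 : ∀ v, ∑ x1, pX1 v x1 = 1) (v : Fin nV) (s : Fin nU × X2) :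
    jl (jointIn ch nU nV pUX2 pV pX1) (fun p => p.2.1) (fun p => (p.1, p.2.2.2.1)) v s =
      pUX2 s.1 s.2 * pV s.1 s.2 v := by
  obtain ⟨u, x2⟩ := s
  unfold jl lawOf jointIn
  simp only [Fintype.sum_prod_type, Prod.mk.injEq]
  have h1 : ∀ (u' : Fin nU) (v' : Fin nV) (x1 : X1) (x2' : X2),
      (∑ y1, ∑ y2, if v' = v ∧ u' = u ∧ x2' = x2 then
        pUX2 u' x2' * pV u' x2' v' * pX1 v' x1 * ch.W x1 x2' y1 y2 else 0) =
      if v' = v ∧ u' = u ∧ x2' = x2 then pUX2 u' x2' * pV u' x2' v' * pX1 v' x1 else 0 := by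
    intro u' v' x1 x2'
    split_ifs
    · simp_rw [← Finset.mul_sum]
      rw [ch.sum_one, mul_one]
    · simp
  simp only [h1]
  have h2 : ∀ (u' : Fin nU) (v' : Fin nV),
      (∑ x1, ∑ x2', if v' = v ∧ u' = u ∧ x2' = x2 then pUX2 u' x2' * pV u' x2' v' * pX1 v' x1 else 0) =
      if v' = v ∧ u' = u then pUX2 u' x2 * pV u' x2 v' else 0 := by
    intro u' v'
    by_cases h : v' = v ∧ u' = u
    · obtain ⟨rfl, rfl⟩ := h
      simp [← Finset.mul_sum, hX1]
    · rw [if_neg h]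
      refine Finset.sum_eq_zero fun x1 _ => Finset.sum_eq_zero fun x2' _ => if_neg ?_
      tauto
  simp only [h2]
  rw [Finset.sum_eq_single u]
  · simp
  · intro b _ hb; simp [hb]
  · simp

lemma joint_nonneg (h1 : ∀ u x2, 0 ≤ pUX2 u x2) (h2 : ∀ u x2 v, 0 ≤ pV u x2 v)
    (h3 : ∀ v x1, 0 ≤ pX1 v x1) (ω) : 0 ≤ jointIn ch nU nV pUX2 pV pX1 ω := by
  unfold jointIn
  exact mul_nonneg (mul_nonneg (mul_nonneg (h1 _ _) (h2 _ _ _)) (h3 _ _)) (ch.nonneg _ _ _ _)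

lemma joint_sum (hU : (∑ u, ∑ x2, pUX2 u x2) = 1) (hV : ∀ u x2, ∑ v, pV u x2 v = 1)
    (hX1 : ∀ v, ∑ x1, pX1 v x1 = 1) : ∑ ω, jointIn ch nU nV pUX2 pV pX1 ω = 1 := by
  rw [← lawOf_sum _ (fun p : Fin nU × Fin nV × X1 × X2 × Y1 × Y2 => (p.2.1, (p.1, p.2.2.2.1))),
    Fintype.sum_prod_type, Finset.sum_comm]
  have := joint_law ch nU nV pUX2 pV pX1 hX1
  unfold jl at this
  simp only [this, ← Finset.mul_sum, hV, mul_one]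
  rw [Fintype.sum_prod_type, hU]

/-- Splitting a block of tuples into a tuple of blocks. -/
def blockEquiv (n : ℕ) : (Fin n → Fin nU × Fin nV × X1 × X2 × Y1 × Y2) ≃
    (Fin n → Fin nU × X2) × (Fin n → Fin nV) × (Fin n → X1) × (Fin n → Y1) × (Fin n → Y2) where
  toFun ω := (fun i => ((ω i).1, (ω i).2.2.2.1), fun i => (ω i).2.1, fun i => (ω i).2.2.1,
    fun i => (ω i).2.2.2.2.1, fun i => (ω i).2.2.2.2.2)
  invFun t i := ((t.1 i).1, t.2.1 i, t.2.2.1 i, (t.1 i).2, t.2.2.2.1 i, t.2.2.2.2 i)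
  left_inv _ := rfl
  right_inv _ := rfl

lemma block_sum (hX1 : ∀ v, ∑ x1, pX1 v x1 = 1) (n : ℕ)
    (Bd : (Fin n → Fin nU × X2) → (Fin n → Fin nV) → (Fin n → Y1) → (Fin n → Y2) → ℝ) :
    ∑ s : Fin n → Fin nU × X2, ∑ v : Fin n → Fin nV,
      (∏ i, jl (jointIn ch nU nV pUX2 pV pX1) (fun p => p.2.1) (fun p => (p.1, p.2.2.2.1)) (v i) (s i)) *
      (∑ x : Fin n → X1, (∏ i, pX1 (v i) (x i)) * ∑ y1 : Fin n → Y1, ∑ y2 : Fin n → Y2,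
        (∏ i, ch.W (x i) (s i).2 (y1 i) (y2 i)) * Bd s v y1 y2) =
    Ex (jointIn ch nU nV pUX2 pV pX1) (fun ω : Fin n → Fin nU × Fin nV × X1 × X2 × Y1 × Y2 =>
      Bd (fun i => ((ω i).1, (ω i).2.2.2.1)) (fun i => (ω i).2.1)
        (fun i => (ω i).2.2.2.2.1) (fun i => (ω i).2.2.2.2.2)) := by
  unfold Ex
  rw [← Equiv.sum_comp (blockEquiv nU nV n).symm]
  simp only [Fintype.sum_prod_type]
  refine Finset.sum_congr rfl fun s _ => Finset.sum_congr rfl fun v _ => ?_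
  rw [Finset.mul_sum]
  refine Finset.sum_congr rfl fun x _ => ?_
  rw [Finset.mul_sum, Finset.mul_sum]
  refine Finset.sum_congr rfl fun y1 _ => ?_
  rw [Finset.mul_sum, Finset.mul_sum]
  refine Finset.sum_congr rfl fun y2 _ => ?_
  rw [← mul_assoc, ← mul_assoc, ← Finset.prod_mul_distrib, ← Finset.prod_mul_distrib]
  congr 1
  refine Finset.prod_congr rfl fun i _ => ?_
  rw [joint_law ch nU nV pUX2 pV pX1 hX1]
  rfl

lemma rate_bound (n : ℕ) (hn : 0 < n) (R : ℝ) :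
    0 < ⌈(2:ℝ) ^ ((n:ℝ) * R)⌉₊ ∧ R ≤ Real.logb 2 (⌈(2:ℝ) ^ ((n:ℝ) * R)⌉₊ : ℝ) / n ∧
    (⌈(2:ℝ) ^ ((n:ℝ) * R)⌉₊ : ℝ) - 1 ≤ (2:ℝ) ^ ((n:ℝ) * R) := by
  have hK : (0:ℝ) < (2:ℝ) ^ ((n:ℝ) * R) := Real.rpow_pos_of_pos (by norm_num) _
  have hn' : (0:ℝ) < n := by exact_mod_cast hn
  refine ⟨Nat.ceil_pos.mpr hK, ?_, ?_⟩
  · rw [le_div_iff₀ hn', Real.le_logb_iff_rpow_le (by norm_num)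
      (by exact_mod_cast Nat.ceil_pos.mpr hK), mul_comm]
    exact Nat.le_ceil _
  · have := Nat.ceil_lt_add_one hK.le
    linarith

lemma achievable_of (R1 R2 : ℝ) (hU0 : ∀ u x2, 0 ≤ pUX2 u x2) (hU : (∑ u, ∑ x2, pUX2 u x2) = 1)
    (hV0 : ∀ u x2 v, 0 ≤ pV u x2 v) (hV : ∀ u x2, ∑ v, pV u x2 v = 1)
    (hX0 : ∀ v x1, 0 ≤ pX1 v x1) (hX1 : ∀ v, ∑ x1, pX1 v x1 = 1)
    (hR1 : R1 ≤ miRV (jointIn ch nU nV pUX2 pV pX1) (fun p => p.2.1) (fun p => p.2.2.2.2.1)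
          - miRV (jointIn ch nU nV pUX2 pV pX1) (fun p => p.2.1) (fun p => (p.1, p.2.2.2.1)))
    (hR2 : R2 ≤ miRV (jointIn ch nU nV pUX2 pV pX1) (fun p => (p.1, p.2.2.2.1)) (fun p => p.2.2.2.2.2)) :
    AchievableT1 ch R1 R2 := by
  intro ε hε
  set μ := jointIn ch nU nV pUX2 pV pX1 with hμdef
  have hμ : ∀ ω, 0 ≤ μ ω := joint_nonneg ch nU nV pUX2 pV pX1 hU0 hV0 hX0
  have hμ1 : ∑ ω, μ ω = 1 := joint_sum ch nU nV pUX2 pV pX1 hU hV hX1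
  set fV : Fin nU × Fin nV × X1 × X2 × Y1 × Y2 → Fin nV := fun p => p.2.1 with hfV
  set fS : Fin nU × Fin nV × X1 × X2 × Y1 × Y2 → Fin nU × X2 := fun p => (p.1, p.2.2.2.1) with hfS
  set fY1 : Fin nU × Fin nV × X1 × X2 × Y1 × Y2 → Y1 := fun p => p.2.2.2.2.1 with hfY1
  set fY2 : Fin nU × Fin nV × X1 × X2 × Y1 × Y2 → Y2 := fun p => p.2.2.2.2.2 with hfY2
  set I1 := miRV μ fV fY1 with hI1
  set I3 := miRV μ fV fS with hI3
  set I2 := miRV μ fS fY2 with hI2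
  have hI30 : 0 ≤ I3 := miRV_nonneg μ hμ hμ1 _ _
  have hne : Nonempty X1 := by
    by_contra hn
    rw [not_nonempty_iff] at hn
    have : ∑ ω, μ ω = 0 := by
      have : IsEmpty (Fin nU × Fin nV × X1 × X2 × Y1 × Y2) := ⟨fun p => hn.elim p.2.2.1⟩
      simp
    linarith
  obtain ⟨C1, hC1⟩ := Thr_lower μ hμ hμ1 fV fY1 (ε / 4) (by positivity)
  obtain ⟨C2, hC2⟩ := Thr_lower μ hμ hμ1 fS fY2 (ε / 4) (by positivity)
  obtain ⟨C3, hC3⟩ := Thr_upper μ hμ hμ1 fV fS (ε / 4) (by positivity)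
  -- choice of n
  set a : ℝ := (2:ℝ) ^ (-(ε / 4)) with ha
  have ha0 : 0 ≤ a := Real.rpow_nonneg (by norm_num) _
  have ha1 : a < 1 := Real.rpow_lt_one_of_one_lt_of_neg (by norm_num) (by linarith)
  have hlim : Filter.Tendsto (fun n : ℕ => 2 * (C1 / n + C2 / n + C3 / n + a ^ n) + 2 * a ^ n + a ^ n)
      Filter.atTop (nhds 0) := by
    have t := tendsto_pow_atTop_nhds_zero_of_lt_one ha0 ha1
    have c1 := tendsto_const_div_atTop_nhds_zero_nat C1
    have c2 := tendsto_const_div_atTop_nhds_zero_nat C2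
    have c3 := tendsto_const_div_atTop_nhds_zero_nat C3
    simpa using (((((c1.add c2).add c3).add t).const_mul 2).add (t.const_mul 2)).add t
  obtain ⟨n, hnε, hn⟩ := ((hlim.eventually (gt_mem_nhds hε)).and (Filter.eventually_gt_atTop 0)).exists
  have hn' : (0:ℝ) < n := by exact_mod_cast hn
  have han : a ^ n = (2:ℝ) ^ ((n:ℝ) * (-(ε / 4))) := by
    rw [ha, ← Real.rpow_natCast, ← Real.rpow_mul (by norm_num), mul_comm]
  obtain ⟨hM1, hM1r, hM1b⟩ := rate_bound n hn (R1 - ε)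
  obtain ⟨hM2, hM2r, hM2b⟩ := rate_bound n hn (R2 - ε)
  obtain ⟨hL, -, hLb⟩ := rate_bound n hn (I3 + ε / 2)
  have hLge : (2:ℝ) ^ ((n:ℝ) * (I3 + ε / 2)) ≤ (⌈(2:ℝ) ^ ((n:ℝ) * (I3 + ε / 2))⌉₊ : ℝ) := Nat.le_ceil _
  set M1 := ⌈(2:ℝ) ^ ((n:ℝ) * (R1 - ε))⌉₊
  set M2 := ⌈(2:ℝ) ^ ((n:ℝ) * (R2 - ε))⌉₊
  set L := ⌈(2:ℝ) ^ ((n:ℝ) * (I3 + ε / 2))⌉₊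
  have hM1' : (1:ℝ) ≤ M1 := by exact_mod_cast hM1
  have hM2' : (1:ℝ) ≤ M2 := by exact_mod_cast hM2
  have hlawS : ∀ s : Fin nU × X2, ∑ v, jl μ fV fS v s = lawOf μ fS s := lawOf_marg_left μ fV fS
  have hWsum : ∀ (x : Fin n → X1) (s : Fin n → Fin nU × X2),
      ∑ y1 : Fin n → Y1, ∑ y2 : Fin n → Y2, ∏ i, ch.W (x i) (s i).2 (y1 i) (y2 i) = 1 := by
    intro x s
    have : ∀ y1 : Fin n → Y1, ∑ y2 : Fin n → Y2, ∏ i, ch.W (x i) (s i).2 (y1 i) (y2 i) =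
        ∏ i, ∑ b, ch.W (x i) (s i).2 (y1 i) b :=
      fun y1 => sum_pi_prod (fun i b => ch.W (x i) (s i).2 (y1 i) b)
    simp_rw [this]
    rw [sum_pi_prod (fun i a => ∑ b, ch.W (x i) (s i).2 a b)]
    simp [ch.sum_one]
  have hXsum : ∀ v : Fin n → Fin nV, ∑ x : Fin n → X1, ∏ i, pX1 (v i) (x i) = 1 := by
    intro v
    rw [sum_pi_prod (fun i b => pX1 (v i) b)]
    simp [hX1]
  obtain ⟨f1, f2, g1, g2, hcode⟩ := oneshot (S := Fin n → Fin nU × X2) (V := Fin n → Fin nV)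
    (X := Fin n → X1) (Y1 := Fin n → Y1) (Y2 := Fin n → Y2) M1 M2 L hM1 hM2 hL
    (fun s => ∏ i, lawOf μ fS (s i)) (fun v => ∏ i, lawOf μ fV (v i))
    (fun s v => ∏ i, jl μ fV fS (v i) (s i))
    (fun v x => ∏ i, pX1 (v i) (x i))
    (fun x s y1 y2 => ∏ i, ch.W (x i) (s i).2 (y1 i) (y2 i))
    (fun s => Finset.prod_nonneg fun i _ => lawOf_nonneg μ hμ _ _)
    (sum_prod_one _ (by rw [lawOf_sum, hμ1]))
    (fun s => Finset.prod_nonneg fun i _ => lawOf_nonneg μ hμ _ _)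
    (sum_prod_one _ (by rw [lawOf_sum, hμ1]))
    (fun s v => Finset.prod_nonneg fun i _ => lawOf_nonneg μ hμ _ _)
    (fun s => by
      rw [sum_pi_prod (fun i v => jl μ fV fS v (s i))]
      exact Finset.prod_congr rfl fun i _ => hlawS _)
    (fun s v => Finset.prod_le_prod (fun i _ => lawOf_nonneg μ hμ _ _)
      (fun i _ => lawOf_le_left μ hμ fV fS _ _))
    (fun v x => Finset.prod_nonneg fun i _ => hX0 _ _) hXsum
    (fun x s y1 y2 => Finset.prod_nonneg fun i _ => ch.nonneg _ _ _ _) hWsum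
    (fun v y => Thr μ fV fY1 (I1 - ε / 4) v y) (fun s y => Thr μ fS fY2 (I2 - ε / 4) s y)
    ((2:ℝ) ^ (-((n:ℝ) * (I1 - ε / 4)))) ((2:ℝ) ^ (-((n:ℝ) * (I2 - ε / 4))))
    ((2:ℝ) ^ ((n:ℝ) * (I3 + ε / 4))) (Real.rpow_nonneg (by norm_num) _)
    (fun y => Thr_conf μ hμ fV fY1 _ y) (fun y => Thr_conf μ hμ fS fY2 _ y)
  -- bounding the terms
  have he := block_sum ch nU nV pUX2 pV pX1 hX1 n (fun s v y1 y2 =>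
    ind (¬ Thr μ fV fY1 (I1 - ε / 4) v y1 ∨ ¬ Thr μ fS fY2 (I2 - ε / 4) s y2))
  have hδ := block_sum ch nU nV pUX2 pV pX1 hX1 n (fun s v y1 y2 =>
    ind (Thr μ fV fS (I3 + ε / 4) v s))
  simp only [← Finset.sum_mul, hWsum, hXsum, one_mul] at hδ
  have heb := Ex_mono (ι := Fin n) μ hμ (F := fun ω =>
      ind (¬ Thr μ fV fY1 (I1 - ε / 4) (fun i => fV (ω i)) (fun i => fY1 (ω i)) ∨
        ¬ Thr μ fS fY2 (I2 - ε / 4) (fun i => fS (ω i)) (fun i => fY2 (ω i))))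
      (G := fun ω => ind (¬ Thr μ fV fY1 (I1 - ε / 4) (fun i => fV (ω i)) (fun i => fY1 (ω i))) +
        ind (¬ Thr μ fS fY2 (I2 - ε / 4) (fun i => fS (ω i)) (fun i => fY2 (ω i)))) (by
    intro ω
    have b1 := ind_nonneg (¬ Thr μ fV fY1 (I1 - ε / 4) (fun i => fV (ω i)) (fun i => fY1 (ω i)))
    have b2 := ind_nonneg (¬ Thr μ fS fY2 (I2 - ε / 4) (fun i => fS (ω i)) (fun i => fY2 (ω i)))
    by_cases h1 : ¬ Thr μ fV fY1 (I1 - ε / 4) (fun i => fV (ω i)) (fun i => fY1 (ω i))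
    · rw [ind_pos (Or.inl h1), ind_pos h1]; linarith
    · by_cases h2 : ¬ Thr μ fS fY2 (I2 - ε / 4) (fun i => fS (ω i)) (fun i => fY2 (ω i))
      · rw [ind_pos (Or.inr h2), ind_pos h2]; linarith
      · rw [ind_neg (not_or.mpr ⟨h1, h2⟩)]; linarith)
  rw [Ex_add] at heb
  have hb1 := hC1 n hn
  have hb2 := hC2 n hn
  have hb3 := hC3 n hn
  have hKL : (2:ℝ) ^ ((n:ℝ) * (I3 + ε / 4)) / L ≤ a ^ n := by
    have : (0:ℝ) < L := by exact_mod_cast hL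
    rw [div_le_iff₀ this, han]
    calc (2:ℝ) ^ ((n:ℝ) * (I3 + ε / 4))
        = (2:ℝ) ^ ((n:ℝ) * (-(ε / 4))) * (2:ℝ) ^ ((n:ℝ) * (I3 + ε / 2)) := by
          rw [← Real.rpow_add (by norm_num)]; congr 1; ring
      _ ≤ _ := mul_le_mul_of_nonneg_left hLge (Real.rpow_nonneg (by norm_num) _)
  have hconf1 : ((M1:ℝ) - 1) * (L * (2:ℝ) ^ (-((n:ℝ) * (I1 - ε / 4)))) ≤ 2 * a ^ n := by
    have hLL : (L:ℝ) ≤ 2 * (2:ℝ) ^ ((n:ℝ) * (I3 + ε / 2)) := by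
      have : (1:ℝ) ≤ (2:ℝ) ^ ((n:ℝ) * (I3 + ε / 2)) :=
        Real.one_le_rpow (by norm_num) (by positivity)
      linarith
    calc ((M1:ℝ) - 1) * (L * (2:ℝ) ^ (-((n:ℝ) * (I1 - ε / 4))))
        ≤ (2:ℝ) ^ ((n:ℝ) * (R1 - ε)) *
          ((2 * (2:ℝ) ^ ((n:ℝ) * (I3 + ε / 2))) * (2:ℝ) ^ (-((n:ℝ) * (I1 - ε / 4)))) := by
          gcongr
      _ = 2 * (2:ℝ) ^ ((n:ℝ) * (R1 - ε) + (n:ℝ) * (I3 + ε / 2) + -((n:ℝ) * (I1 - ε / 4))) := by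
          rw [Real.rpow_add (by norm_num), Real.rpow_add (by norm_num)]; ring
      _ ≤ 2 * a ^ n := by
          rw [han]
          refine mul_le_mul_of_nonneg_left ?_ (by norm_num)
          refine Real.rpow_le_rpow_of_exponent_le (by norm_num) ?_
          have : (n:ℝ) * (R1 - ε) + (n:ℝ) * (I3 + ε / 2) + -((n:ℝ) * (I1 - ε / 4)) =
            n * (R1 - ε + (I3 + ε / 2) - (I1 - ε / 4)) := by ring
          rw [this]
          refine mul_le_mul_of_nonneg_left ?_ hn'.le
          linarith
  have hconf2 : ((M2:ℝ) - 1) * (2:ℝ) ^ (-((n:ℝ) * (I2 - ε / 4))) ≤ a ^ n := by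
    calc ((M2:ℝ) - 1) * (2:ℝ) ^ (-((n:ℝ) * (I2 - ε / 4)))
        ≤ (2:ℝ) ^ ((n:ℝ) * (R2 - ε)) * (2:ℝ) ^ (-((n:ℝ) * (I2 - ε / 4))) := by
          gcongr
      _ = (2:ℝ) ^ ((n:ℝ) * (R2 - ε) + -((n:ℝ) * (I2 - ε / 4))) := by
          rw [Real.rpow_add (by norm_num)]
      _ ≤ a ^ n := by
          rw [han]
          refine Real.rpow_le_rpow_of_exponent_le (by norm_num) ?_
          have : (n:ℝ) * (R2 - ε) + -((n:ℝ) * (I2 - ε / 4)) = n * (R2 - ε - (I2 - ε / 4)) := by ring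
          rw [this]
          refine mul_le_mul_of_nonneg_left ?_ hn'.le
          linarith
  have hδ' : ∑ s : Fin n → Fin nU × X2, ∑ v : Fin n → Fin nV, (∏ i, jl μ fV fS (v i) (s i)) *
      ind ((2:ℝ) ^ ((n:ℝ) * (I3 + ε / 4)) * ((∏ i, lawOf μ fS (s i)) * ∏ i, lawOf μ fV (v i)) <
        ∏ i, jl μ fV fS (v i) (s i)) ≤ C3 / n := by
    refine le_trans (le_of_eq ?_) hb3
    refine Eq.trans ?_ hδ
    refine Finset.sum_congr rfl fun s _ => Finset.sum_congr rfl fun v _ => ?_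
    unfold Thr
    rw [mul_comm (∏ i, lawOf μ fS (s i))]
  set ee := ∑ s : Fin n → Fin nU × X2, ∑ v : Fin n → Fin nV,
      (∏ i, jl μ fV fS (v i) (s i)) *
      (∑ x : Fin n → X1, (∏ i, pX1 (v i) (x i)) * ∑ y1 : Fin n → Y1, ∑ y2 : Fin n → Y2,
        (∏ i, ch.W (x i) (s i).2 (y1 i) (y2 i)) *
        ind (¬ Thr μ fV fY1 (I1 - ε / 4) v y1 ∨ ¬ Thr μ fS fY2 (I2 - ε / 4) s y2)) with hee
  have hee' : ee ≤ C1 / n + C2 / n := by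
    refine le_trans (le_of_eq he) (le_trans heb ?_)
    linarith
  have hMM : (0:ℝ) < M1 * M2 := by positivity
  have htot : (1 / (M1 * M2) : ℝ) * (∑ w1 : Fin M1, ∑ w2 : Fin M2, ∑ y1 : Fin n → Y1,
      ∑ y2 : Fin n → Y2, (∏ i, ch.W (f1 w1 w2 i) (f2 w2 i).2 (y1 i) (y2 i)) *
        ((if g1 y1 = w1 then 0 else 1) + (if g2 y2 = w2 then 0 else 1))) ≤ ε := by
    rw [one_div, inv_mul_le_iff₀ hMM]
    refine hcode.trans (mul_le_mul_of_nonneg_left ?_ hMM.le)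
    linarith
  have hsplit : pe1 ch n M1 M2 f1 (fun w i => (f2 w i).2) g1 +
      pe2 ch n M1 M2 f1 (fun w i => (f2 w i).2) g2 ≤ ε := by
    refine le_trans (le_of_eq ?_) htot
    unfold pe1 pe2
    rw [← mul_add]
    simp only [← Finset.sum_add_distrib, ← mul_add]
  have hWp : ∀ (w1 : Fin M1) (w2 : Fin M2) (y1 : Fin n → Y1) (y2 : Fin n → Y2),
      0 ≤ ∏ i, ch.W (f1 w1 w2 i) (f2 w2 i).2 (y1 i) (y2 i) :=
    fun _ _ _ _ => Finset.prod_nonneg fun i _ => ch.nonneg _ _ _ _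
  have hp1 : 0 ≤ pe1 ch n M1 M2 f1 (fun w i => (f2 w i).2) g1 := by
    refine mul_nonneg (by positivity) (Finset.sum_nonneg fun w1 _ => Finset.sum_nonneg fun w2 _ =>
      Finset.sum_nonneg fun y1 _ => Finset.sum_nonneg fun y2 _ => mul_nonneg (hWp _ _ _ _) ?_)
    split_ifs <;> norm_num
  have hp2 : 0 ≤ pe2 ch n M1 M2 f1 (fun w i => (f2 w i).2) g2 := by
    refine mul_nonneg (by positivity) (Finset.sum_nonneg fun w1 _ => Finset.sum_nonneg fun w2 _ =>
      Finset.sum_nonneg fun y1 _ => Finset.sum_nonneg fun y2 _ => mul_nonneg (hWp _ _ _ _) ?_)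
    split_ifs <;> norm_num
  exact ⟨n, M1, M2, f1, fun w i => (f2 w i).2, g1, g2, hn, hM1, hM2, hM1r, hM2r,
    by linarith, by linarith⟩

end Main

/-- **Theorem 1 (achievability).**  For every two-user discrete memoryless interference
channel with degraded message sets in which transmitter 1 knows both messages, the
region `ℛ_in` is achievable: `ℛ_in ⊆ C^{T₁}_{IFC}`. -/
theorem Rin_subset_capacityT1 (ch : DMIFC X1 X2 Y1 Y2) : Rin ch ⊆ CapacityT1 ch := by
  rintro ⟨R1, R2⟩ ⟨nU, nV, pUX2, pV, pX1, hU0, hU, hV0, hV, hX0, hX1, hR1, hR2⟩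
  exact subset_closure (achievable_of ch nU nV pUX2 pV pX1 R1 R2 hU0 hU hV0 hV hX0 hX1 hR1 hR2)
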